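/- Let k be an algebraically closed field and let β be a nontrivial, linear, upper-triangular 𝔾ₐ-coaction on A = k[x₁,…,xₙ]. Let W := {ℓ ∈ span_k(x₁,…,xₙ) : β(ℓ) = ℓ} be the subspace of invariant linear forms. Then the large pedestal ideal of A is zero if and only if: k has characteristic p > 0, W has dimension n − 1, and for every linear form x ∉ W there exist no polynomial c(t) ∈ k[t] and linear form w ∈ W with β(x) − x = c(t)·w (equivalently, the variance of any non-invariant element of the second socle is greater than two). In particular, if the large pedestal ideal of A is zero and β is nontrivial, then the characteristic of k is positive. -/

import Mathlib

open Polynomial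

/-- Substitute `t ↦ t₁ + t₂` into a polynomial, landing in `R[t₁][t₂]`
(inner variable `t₁`, outer variable `t₂`). -/
noncomputable def coaddSubst {R : Type*} [CommSemiring R] (p : Polynomial R) :
    Polynomial (Polynomial R) :=
  p.eval₂ ((Polynomial.C : Polynomial R →+* Polynomial (Polynomial R)).comp
      (Polynomial.C : R →+* Polynomial R))
    (Polynomial.C Polynomial.X + Polynomial.X)

/-- A 𝔾ₐ-coaction on a commutative `k`-algebra `A`: a `k`-algebra homomorphism
`β : A → A[t]` satisfying the counit and coassociativity axioms. -/
def IsGaCoaction {k A : Type*} [CommSemiring k] [CommSemiring A] [Algebra k A]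
    (β : A →ₐ[k] Polynomial A) : Prop :=
  (∀ a : A, (β a).eval 0 = a) ∧
  (∀ a : A, coaddSubst (β a) = (β a).map β.toRingHom)

/-- `c(t) ∈ k[t]` is additive: `c(t₁+t₂) = c(t₁) + c(t₂)` in `k[t₁][t₂]`. -/
def IsAdditivePoly {k : Type*} [CommSemiring k] (c : Polynomial k) : Prop :=
  coaddSubst c = Polynomial.C c + c.map (Polynomial.C : k →+* Polynomial k)


section helpers

lemma coaddSubst_eq_taylor {R : Type*} [CommRing R] (p : R[X]) :
    coaddSubst p = taylor X (p.map C) := by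
  rw [taylor_apply, comp, eval₂_map, coaddSubst, add_comm]

lemma coeff_coaddSubst {R : Type*} [CommRing R] (p : R[X]) (i : ℕ) :
    (coaddSubst p).coeff i = hasseDeriv i p := by
  rw [coaddSubst_eq_taylor, taylor_coeff]
  have h : hasseDeriv i (p.map C) = (hasseDeriv i p).map C := by
    ext j : 1
    simp [hasseDeriv_coeff]
  rw [h, eval_map, eval₂_C_X]

lemma coaddSubst_add {R : Type*} [CommRing R] (p q : R[X]) :
    coaddSubst (p + q) = coaddSubst p + coaddSubst q := by
  simp [coaddSubst, eval₂_add]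

lemma coaddSubst_C {R : Type*} [CommRing R] (a : R) :
    coaddSubst (C a) = C (C a) := by
  simp [coaddSubst]

lemma coaddSubst_mul_C {R : Type*} [CommRing R] (p : R[X]) (a : R) :
    coaddSubst (p * C a) = coaddSubst p * C (C a) := by
  simp [coaddSubst, eval₂_mul]

lemma coaddSubst_map {R S : Type*} [CommRing R] [CommRing S] (f : R →+* S) (p : R[X]) :
    coaddSubst (p.map f) = (coaddSubst p).map (mapRingHom f) := by
  ext i j
  simp [coeff_coaddSubst, hasseDeriv_coeff]

lemma IsAdditivePoly.comp_X_add {R : Type*} [CommRing R] {p : R[X]} (h : IsAdditivePoly p)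
    (a : R) : p.comp (X + C a) = p + C (p.eval a) := by
  rw [← taylor_apply]
  ext1
  rename_i i
  have h1 := congrArg (fun q : R[X][X] => (q.coeff i).eval a) h
  simp only [coeff_coaddSubst, coeff_add, coeff_C, coeff_map, eval_add, eval_C] at h1
  rw [taylor_coeff, h1, coeff_add, coeff_C, add_comm]
  split_ifs <;> simp

lemma IsAdditivePoly.coeff_mul {R : Type*} [CommRing R] {p : R[X]} (h : IsAdditivePoly p)
    (i j : ℕ) (hi : 0 < i) (hj : 0 < j) : ((i + j).choose i : R) * p.coeff (i + j) = 0 := by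
  have h1 := congrArg (fun q : R[X][X] => (q.coeff i).coeff j) h
  simpa [coeff_coaddSubst, hasseDeriv_coeff, coeff_C, hi.ne', hj.ne', add_comm] using h1

lemma IsAdditivePoly.coeff_zero {R : Type*} [CommRing R] {p : R[X]} (h : IsAdditivePoly p) :
    p.coeff 0 = 0 := by
  have h1 := congrArg (fun q : R[X][X] => (q.coeff 0).coeff 0) h
  simpa [coeff_coaddSubst, hasseDeriv_coeff, coeff_C] using h1

lemma IsAdditivePoly.of_map_mul {k A : Type*} [Field k] [CommRing A] [IsDomain A] [Algebra k A]
    {c : k[X]} {h : A} (hh : h ≠ 0)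
    (H : IsAdditivePoly (c.map (algebraMap k A) * C h)) : IsAdditivePoly c := by
  unfold IsAdditivePoly at *
  rw [coaddSubst_mul_C, coaddSubst_map, Polynomial.map_mul, map_C, C_mul, ← add_mul] at H
  have h2 := mul_right_cancel₀ (by simpa using hh) H
  ext i j
  have h3 := congrArg (fun q : A[X][X] => (q.coeff i).coeff j) h2
  apply (algebraMap k A).injective
  by_cases hi : i = 0 <;> by_cases hj : j = 0 <;> simpa [coeff_C, hi, hj] using h3

lemma nat_pow_of_choose (p : ℕ) [hp : Fact p.Prime] (m : ℕ) (hm : m ≠ 0)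
    (h : ∀ i j, 0 < i → 0 < j → i + j = m → p ∣ (i + j).choose i) : ∃ e, m = p ^ e := by
  induction m using Nat.strong_induction_on with
  | _ m ih =>
    by_cases hm1 : m = 1
    · exact ⟨0, by simp [hm1]⟩
    have h1 := h 1 (m - 1) (by omega) (by omega) (by omega)
    rw [show 1 + (m - 1) = m by omega, Nat.choose_one_right] at h1
    obtain ⟨u, rfl⟩ := h1
    have hp2 := hp.out.two_le
    have hu : u ≠ 0 := by rintro rfl; simp at hm
    obtain ⟨e, rfl⟩ := ih u (by nlinarith [Nat.pos_of_ne_zero hu]) hu (by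
      intro i j hi hj hij
      have h2 := h (p * i) (p * j) (by positivity) (by positivity) (by rw [← hij, mul_add])
      have h3 := Choose.choose_modEq_choose_mod_mul_choose_div_nat (p := p) (n := p * i + p * j) (k := p * i)
      rw [← mul_add] at h3 h2
      simp [Nat.mul_div_cancel_left _ hp.out.pos] at h3
      exact (Nat.ModEq.dvd_iff h3 dvd_rfl).1 h2)
    exact ⟨e + 1, by ring⟩

lemma IsAdditivePoly.natDegree_eq {R : Type*} [CommRing R] [IsDomain R] (p : ℕ) [Fact p.Prime]
    [CharP R p] {M : R[X]} (h : IsAdditivePoly M) (hM : M ≠ 0) : ∃ e, M.natDegree = p ^ e := by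
  have hl : M.coeff M.natDegree ≠ 0 := by simpa using hM
  apply nat_pow_of_choose
  · intro h0
    rw [h0, h.coeff_zero] at hl
    exact hl rfl
  · intro i j hi hj hij
    have := h.coeff_mul i j hi hj
    rw [hij] at this ⊢
    exact (CharP.cast_eq_zero_iff R p _).1 ((mul_eq_zero.1 this).resolve_right hl)

lemma line_of_coeff {k A : Type*} [Field k] [CommRing A] [Algebra k A] (D : A[X]) (w : A)
    (h : ∀ j, ∃ r : k, D.coeff j = r • w) :
    ∃ c : k[X], D = c.map (algebraMap k A) * C w := by
  choose r hr using h
  refine ⟨∑ j ∈ D.support, monomial j (r j), ?_⟩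
  ext j
  simp only [coeff_mul_C, coeff_map, finsetSum_coeff, coeff_monomial]
  by_cases hj : j ∈ D.support
  · rw [Finset.sum_eq_single j]
    · simp [hr, Algebra.smul_def]
    · intro i _ hij; simp [hij]
    · intro h1; exact absurd hj h1
  · rw [Finset.sum_eq_zero]
    · simpa using hj
    · intro i hi; rw [if_neg]; rintro rfl; exact hj hi

lemma gauss {R : Type*} [CommRing R] [IsDomain R] [UniqueFactorizationMonoid R] (G : R[X]) :
    ∃ (r : R) (G' : R[X]), G = C r * G' ∧ ∀ (Q : R[X]) (h : R), h ≠ 0 →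
      G' ∣ C h * Q → G' ∣ Q := by
  let _ : NormalizedGCDMonoid R := Classical.choice inferInstance
  refine ⟨G.content, G.primPart, G.eq_C_content_mul_primPart, ?_⟩
  rintro Q h hh ⟨H, hH⟩
  have h1 : C h ∣ G.primPart * H := ⟨Q, hH.symm⟩
  rw [← dvd_content_iff_C_dvd, (associated_content_mul ..).dvd_iff_dvd_right, content_primPart,
    one_mul, dvd_content_iff_C_dvd] at h1
  obtain ⟨K, rfl⟩ := h1
  refine ⟨K, mul_left_cancel₀ (a := C h) (by simpa using hh) ?_⟩
  rw [hH]; ring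

noncomputable def swapT (n : ℕ) (k : Type*) [Field k] :
    (MvPolynomial (Fin n) k)[X] ≃ₐ[k] MvPolynomial (Fin n) k[X] :=
  (MvPolynomial.optionEquivLeft k (Fin n)).symm.trans (MvPolynomial.optionEquivRight k (Fin n))

lemma swapT_X (n : ℕ) (k : Type*) [Field k] : swapT n k X = MvPolynomial.C X := by
  simp [swapT]

lemma swapT_CX (n : ℕ) (k : Type*) [Field k] (i : Fin n) :
    swapT n k (C (MvPolynomial.X i)) = MvPolynomial.X i := by
  simp [swapT]

lemma swapT_map (n : ℕ) (k : Type*) [Field k] (c : k[X]) :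
    swapT n k (c.map (algebraMap k (MvPolynomial (Fin n) k))) = MvPolynomial.C c := by
  induction c using Polynomial.induction_on' with
  | add p q hp hq => rw [Polynomial.map_add, map_add, hp, hq, map_add]
  | monomial i a =>
    rw [map_monomial, ← C_mul_X_pow_eq_monomial, map_mul, map_pow, swapT_X,
      ← C_mul_X_pow_eq_monomial]
    have : swapT n k (C (algebraMap k _ a)) = MvPolynomial.C (C a) := by
      have := (swapT n k).commutes a
      simpa [Polynomial.algebraMap_apply, MvPolynomial.algebraMap_apply] using this
    rw [this]; simp

lemma eq_map_of_deg {n : ℕ} {k : Type*} [Field k] (G : (MvPolynomial (Fin n) k)[X])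
    (h : (swapT n k G).totalDegree = 0) :
    ∃ m : k[X], G = m.map (algebraMap k (MvPolynomial (Fin n) k)) := by
  rw [MvPolynomial.totalDegree_eq_zero_iff_eq_C] at h
  exact ⟨_, (swapT n k).injective (h.trans (swapT_map n k _).symm)⟩

lemma deg_le_one {n : ℕ} {k : Type*} [Field k] (D : (MvPolynomial (Fin n) k)[X])
    (h : ∀ i, D.coeff i ∈ Submodule.span k
      (Set.range (MvPolynomial.X : Fin n → MvPolynomial (Fin n) k))) :
    (swapT n k D).totalDegree ≤ 1 := by
  have key : ∀ l ∈ Submodule.span k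
      (Set.range (MvPolynomial.X : Fin n → MvPolynomial (Fin n) k)),
      (swapT n k (C l)).totalDegree ≤ 1 := by
    intro l hl
    induction hl using Submodule.span_induction with
    | mem x hx => obtain ⟨i, rfl⟩ := hx; rw [swapT_CX]; simp
    | zero => simp
    | add x y _ _ hx hy =>
      rw [map_add, map_add]
      exact (MvPolynomial.totalDegree_add _ _).trans (max_le hx hy)
    | smul a x _ hx =>
      rw [← smul_C, map_smul]
      exact (MvPolynomial.totalDegree_smul_le _ _).trans hx
  rw [D.as_sum_support_C_mul_X_pow, map_sum]
  apply MvPolynomial.totalDegree_finsetSum_le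
  intro i _
  rw [map_mul, map_pow, swapT_X, ← map_pow]
  refine (MvPolynomial.totalDegree_mul _ _).trans ?_
  rw [MvPolynomial.totalDegree_C, add_zero]
  exact key _ (h i)

lemma line_of_dvd {n : ℕ} {k : Type*} [Field k] (D : (MvPolynomial (Fin n) k)[X])
    (c : k[X]) (h : MvPolynomial (Fin n) k) (hc : c ≠ 0) (hh : h ≠ 0)
    (hD : D ∣ c.map (algebraMap k (MvPolynomial (Fin n) k)) * C h) :
    ∃ (m : k[X]) (r : MvPolynomial (Fin n) k),
      D = m.map (algebraMap k (MvPolynomial (Fin n) k)) * C r := by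
  obtain ⟨r, D', rfl, hD'⟩ := gauss D
  have h1 : D' ∣ c.map (algebraMap k (MvPolynomial (Fin n) k)) := by
    apply hD' _ h hh
    rw [mul_comm (C h)]
    exact (Dvd.intro_left _ rfl).trans hD
  obtain ⟨H, hH⟩ := h1
  have h2 : swapT n k D' * swapT n k H = MvPolynomial.C c := by
    rw [← map_mul, ← hH, swapT_map]
  have h3 : swapT n k D' * swapT n k H ≠ 0 := by rw [h2]; simpa using hc
  have h4 := MvPolynomial.totalDegree_mul_of_isDomain (left_ne_zero_of_mul h3)
    (right_ne_zero_of_mul h3)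
  rw [h2, MvPolynomial.totalDegree_C] at h4
  obtain ⟨m, rfl⟩ := eq_map_of_deg D' (by omega)
  exact ⟨m, r, mul_comm _ _⟩

end helpers

section coact

set_option linter.unusedSectionVars false

variable {k A : Type*} [Field k] [CommRing A] [IsDomain A] [Algebra k A]

/-- All coefficients of `M` are invariant. -/
def InvC (β : A →ₐ[k] A[X]) (M : A[X]) : Prop :=
  M.map β.toRingHom = M.map C

lemma invC_iff (β : A →ₐ[k] A[X]) (M : A[X]) :
    InvC β M ↔ ∀ i, β (M.coeff i) = C (M.coeff i) := by
  unfold InvC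
  rw [Polynomial.ext_iff]
  simp

lemma additive_of_inv {β : A →ₐ[k] A[X]} (hβ : IsGaCoaction β) {g : A} {M : A[X]}
    (hg : β g = C g + M) (hM : InvC β M) : IsAdditivePoly M := by
  have h := hβ.2 g
  rw [hg, coaddSubst_add, coaddSubst_C, Polynomial.map_add, map_C, hM] at h
  have h2 : β.toRingHom g = C g + M := hg
  rw [h2, C_add, add_assoc] at h
  exact add_left_cancel h

lemma coeff_choose {β : A →ₐ[k] A[X]} (hβ : IsGaCoaction β) (z : A) (i j : ℕ) :
    ((i + j).choose i : A) * (β z).coeff (i + j) = (β ((β z).coeff i)).coeff j := by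
  have h := congrArg (fun q : A[X][X] => (q.coeff i).coeff j) (hβ.2 z)
  simpa [coeff_coaddSubst, hasseDeriv_coeff, add_comm] using h

lemma lead_inv {β : A →ₐ[k] A[X]} (hβ : IsGaCoaction β) (z : A) (M : A[X])
    (hz : β z = C z + M) : β M.leadingCoeff = C M.leadingCoeff := by
  by_cases hM : M = 0
  · simp [hM]
  have h0 : M.coeff 0 = 0 := by
    have := hβ.1 z
    rw [hz] at this
    simpa [coeff_zero_eq_eval_zero] using this
  have hN : M.natDegree ≠ 0 := by
    intro h
    apply hM
    rw [← leadingCoeff_eq_zero, leadingCoeff, h, h0]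
  have hc : (β z).coeff M.natDegree = M.leadingCoeff := by
    rw [hz]; simp [coeff_C, hN]
  rw [← hc]
  ext j
  rw [← coeff_choose hβ]
  rcases Nat.eq_zero_or_pos j with rfl | hj
  · simp
  · rw [hz, coeff_C, if_neg hj.ne', coeff_add, coeff_C, if_neg (by omega),
      coeff_eq_zero_of_natDegree_lt (by omega)]
    simp

lemma pseudo (p : ℕ) [Fact p.Prime] [CharP A p] {β : A →ₐ[k] A[X]} (hβ : IsGaCoaction β)
    (g : A) (G : A[X]) (hg : β g = C g + G) (hG : InvC β G) (hG0 : G ≠ 0)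
    (hmin : ∀ g' M', β g' = C g' + M' → InvC β M' → M' ≠ 0 → G.natDegree ≤ M'.natDegree) :
    ∀ (N : ℕ) (g' : A) (M' : A[X]), M'.natDegree = N → β g' = C g' + M' → InvC β M' →
      ∃ b : A, b ≠ 0 ∧ G ∣ C b * M' := by
  intro N
  induction N using Nat.strong_induction_on with
  | _ N ih =>
    intro g' M' hN hg' hM'
    by_cases hM0 : M' = 0
    · exact ⟨1, one_ne_zero, by simp [hM0]⟩
    obtain ⟨e, he⟩ := (additive_of_inv hβ hg hG).natDegree_eq p hG0
    obtain ⟨e', he'⟩ := (additive_of_inv hβ hg' hM').natDegree_eq p hM0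
    have hle := hmin g' M' hg' hM' hM0
    rw [he, he'] at hle
    have hee : e ≤ e' := (Nat.pow_le_pow_iff_right (Fact.out : p.Prime).one_lt).1 hle
    obtain ⟨d, rfl⟩ := Nat.exists_eq_add_of_le hee
    have hlG : G.leadingCoeff ≠ 0 := by simpa using hG0
    have hlM : M'.leadingCoeff ≠ 0 := by simpa using hM0
    set a := G.leadingCoeff ^ p ^ d with ha
    set l := M'.leadingCoeff with hl
    have ha0 : a ≠ 0 := pow_ne_zero _ hlG
    have hia : β a = C a := by
      rw [ha, map_pow, lead_inv hβ g G hg, C_pow]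
    have hil : β l = C l := lead_inv hβ g' M' hg'
    set M'' := C a * M' - C l * G ^ p ^ d with hM''
    have hg'' : β (a * g' - l * g ^ p ^ d) = C (a * g' - l * g ^ p ^ d) + M'' := by
      rw [map_sub, map_mul, map_mul, hia, hil, map_pow β g, hg, hg', add_pow_char_pow]
      simp only [hM'', C_sub, C_mul, C_pow]
      ring
    have hi'' : InvC β M'' := by
      unfold InvC at hG hM' ⊢
      have h1 : β.toRingHom a = C a := hia
      have h2 : β.toRingHom l = C l := hil
      simp only [hM'', Polynomial.map_sub, Polynomial.map_mul, Polynomial.map_pow, hG, hM', map_C,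
        h1, h2]
    have key : ∃ b : A, b ≠ 0 ∧ G ∣ C b * M'' := by
      by_cases h0 : M'' = 0
      · exact ⟨1, one_ne_zero, by simp [h0]⟩
      refine ih _ ?_ _ _ rfl hg'' hi''
      have hd1 : (C a * M').degree = M'.degree := degree_C_mul ha0
      rw [← hN]
      apply natDegree_lt_natDegree h0
      rw [← hd1]
      apply degree_sub_lt_left
      · rw [hd1, degree_C_mul hlM, degree_eq_natDegree hM0, degree_eq_natDegree (pow_ne_zero _ hG0),
          natDegree_pow, he, he', pow_add, mul_comm]
      · exact mul_ne_zero (by simpa using ha0) hM0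
      · rw [leadingCoeff_mul, leadingCoeff_mul, leadingCoeff_C, leadingCoeff_C, leadingCoeff_pow,
          mul_comm]
    obtain ⟨b, hb, hdvd⟩ := key
    refine ⟨b * a, mul_ne_zero hb ha0, ?_⟩
    have h3 : C (b * a) * M' = C b * M'' + C b * C l * G ^ p ^ d := by
      simp only [hM'', C_mul]; ring
    rw [h3]
    exact dvd_add hdvd (Dvd.dvd.mul_left (dvd_pow_self _ (pow_ne_zero _ (Fact.out : p.Prime).ne_zero)) _)

end coact

section mv

variable {n : ℕ} {k : Type*} [Field k]

/-- If `D`, `E` are additive and proportional over `k(t)`, then either `D` is on a line,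
or they are proportional over `k`. -/
lemma proportional [Infinite k] (D E : (MvPolynomial (Fin n) k)[X]) (hD : IsAdditivePoly D)
    (hE : IsAdditivePoly E) (hD0 : D ≠ 0) (a b : k[X]) (ha : a ≠ 0)
    (hab : b.map (algebraMap k (MvPolynomial (Fin n) k)) * D =
      a.map (algebraMap k (MvPolynomial (Fin n) k)) * E) :
    (∃ (m : k[X]) (r : MvPolynomial (Fin n) k),
      D = m.map (algebraMap k (MvPolynomial (Fin n) k)) * C r) ∨
    ∃ s t : k, s ≠ 0 ∧ s • E = t • D := by
  have ha' : a.map (algebraMap k (MvPolynomial (Fin n) k)) ≠ 0 := by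
    rwa [Ne, Polynomial.map_eq_zero_iff (algebraMap k (MvPolynomial (Fin n) k)).injective]
  obtain ⟨γ, hγ⟩ : ∃ γ : k, (D * a.map (algebraMap k (MvPolynomial (Fin n) k))).eval
      (algebraMap k _ γ) ≠ 0 := by
    by_contra! hcon
    refine mul_ne_zero hD0 ha' (eq_zero_of_infinite_isRoot _ (Set.Infinite.mono ?_
      (Set.infinite_range_of_injective (algebraMap k (MvPolynomial (Fin n) k)).injective)))
    rintro _ ⟨γ, rfl⟩
    exact hcon γ
  rw [eval_mul, eval_map_algebraMap, aeval_algebraMap_apply] at hγ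
  have hDγ := left_ne_zero_of_mul hγ
  have haγ : a.eval γ ≠ 0 := by
    intro h
    apply right_ne_zero_of_mul hγ
    simp [h]
  set T : (MvPolynomial (Fin n) k) := algebraMap k _ γ with hT
  have hmap : ∀ c : k[X], (c.map (algebraMap k (MvPolynomial (Fin n) k))).comp (X + C T) =
      (c.comp (X + C γ)).map (algebraMap k (MvPolynomial (Fin n) k)) := by
    intro c; rw [Polynomial.map_comp]; simp [hT]
  have hev : ∀ c : k[X], (c.map (algebraMap k (MvPolynomial (Fin n) k))).eval T =
      algebraMap k _ (c.eval γ) := by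
    intro c; rw [hT, eval_map_algebraMap, aeval_algebraMap_apply]; simp
  have h1 := congrArg (fun q => q.comp (X + C T)) hab
  simp only [mul_comp, hmap, hD.comp_X_add, hE.comp_X_add] at h1
  have h2 := congrArg (fun q => C (q.eval T)) hab
  simp only [eval_mul, hev, C_mul] at h2
  set φ := fun c : k[X] => c.map (algebraMap k (MvPolynomial (Fin n) k)) with hφ
  set u : k[X] := C (a.eval γ) * (b.comp (X + C γ) * a - a.comp (X + C γ) * b) with hu
  set v : k[X] := a * (a.comp (X + C γ) * C (b.eval γ) - b.comp (X + C γ) * C (a.eval γ)) with hv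
  have h3 : φ u * D = φ v * C (D.eval T) := by
    simp only [hφ, hu, hv, Polynomial.map_mul, Polynomial.map_sub, map_C]
    linear_combination (a.map (algebraMap k (MvPolynomial (Fin n) k))) * C (algebraMap k _ (a.eval γ)) * h1
      - C (algebraMap k _ (a.eval γ)) * (a.comp (X + C γ)).map (algebraMap k (MvPolynomial (Fin n) k)) * hab
      - (a.map (algebraMap k (MvPolynomial (Fin n) k))) * (a.comp (X + C γ)).map (algebraMap k (MvPolynomial (Fin n) k)) * h2
  by_cases hv0 : v = 0
  · right
    refine ⟨a.eval γ, b.eval γ, haγ, ?_⟩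
    have h4 := (mul_eq_zero.1 hv0).resolve_left ha
    have h5 := congrArg (fun q => q.comp (X - C γ)) h4
    simp only [sub_comp, mul_comp, comp_assoc, add_comp, X_comp, C_comp, sub_add_cancel, comp_X,
      zero_comp] at h5
    have h6 := congrArg φ h5
    simp only [hφ, Polynomial.map_mul, Polynomial.map_sub, map_C, Polynomial.map_zero] at h6
    apply mul_left_cancel₀ ha'
    rw [Algebra.smul_def, Algebra.smul_def]
    simp only [Polynomial.algebraMap_apply]
    linear_combination -D * h6 - C (algebraMap k _ (a.eval γ)) * hab
  · left
    exact line_of_dvd D v _ hv0 hDγ ⟨φ u, by rw [← h3, mul_comm]⟩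

end mv

section main

variable {n : ℕ} {k : Type*} [Field k]

/-- The pedestal ideal vanishes. -/
def PedZero (β : MvPolynomial (Fin n) k →ₐ[k] Polynomial (MvPolynomial (Fin n) k)) : Prop :=
  ∀ (g h : MvPolynomial (Fin n) k) (c : Polynomial k),
        IsAdditivePoly c → c ≠ 0 →
        β h = Polynomial.C h →
        β g = Polynomial.C g +
          c.map (algebraMap k (MvPolynomial (Fin n) k)) * Polynomial.C h →
        h = 0

variable {β : MvPolynomial (Fin n) k →ₐ[k] Polynomial (MvPolynomial (Fin n) k)}

lemma beta_smul_C (r : k) (x : MvPolynomial (Fin n) k) :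
    (C (r • x) : Polynomial (MvPolynomial (Fin n) k)) = r • C x := (smul_C r x).symm

lemma line_lead {M : (MvPolynomial (Fin n) k)[X]} (hM : M ≠ 0) (m : k[X])
    (r : MvPolynomial (Fin n) k)
    (h : M = m.map (algebraMap k (MvPolynomial (Fin n) k)) * C r) :
    m.leadingCoeff⁻¹ • M.leadingCoeff = r := by
  have hm : m ≠ 0 := by rintro rfl; simp at h; exact hM h
  rw [h, leadingCoeff_mul, leadingCoeff_map_of_injective (algebraMap k _).injective, leadingCoeff_C,
    ← Algebra.smul_def, smul_smul, inv_mul_cancel₀ (by simpa using hm), one_smul]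

lemma no_line (hβ : IsGaCoaction β) (hP : PedZero β) (g : MvPolynomial (Fin n) k)
    (M : (MvPolynomial (Fin n) k)[X]) (hg : β g = C g + M) (hi : InvC β M) (hM : M ≠ 0)
    (m : k[X]) (r : MvPolynomial (Fin n) k) :
    M ≠ m.map (algebraMap k (MvPolynomial (Fin n) k)) * C r := by
  intro h
  have hm : m ≠ 0 := by rintro rfl; simp at h; exact hM h
  have hr : r ≠ 0 := by rintro rfl; simp at h; exact hM h
  have hinv : β r = C r := by
    rw [← line_lead hM m r h, map_smul, lead_inv hβ g M hg, beta_smul_C]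
  have had := additive_of_inv hβ hg hi
  rw [h] at had
  exact hr (hP g r m (had.of_map_mul hr) hm hinv (by rw [hg, h]))

lemma char_pos (hβ : IsGaCoaction β) (hP : PedZero β) (g : MvPolynomial (Fin n) k)
    (M : (MvPolynomial (Fin n) k)[X]) (hg : β g = C g + M) (hi : InvC β M) (hM : M ≠ 0) :
    0 < ringChar k := by
  by_contra hcon
  have h0 : ringChar k = 0 := by omega
  have : CharZero k := (CharP.ringChar_zero_iff_CharZero k).1 h0
  have : CharZero (MvPolynomial (Fin n) k) :=
    charZero_of_injective_algebraMap (algebraMap k _).injective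
  have had := additive_of_inv hβ hg hi
  refine no_line hβ hP g M hg hi hM X (M.coeff 1) ?_
  ext1
  rename_i j
  rw [Polynomial.map_X, coeff_mul_C, coeff_X]
  by_cases hj : j = 1
  · simp [hj]
  rw [if_neg (Ne.symm hj), zero_mul]
  rcases Nat.eq_zero_or_pos j with rfl | hj'
  · exact had.coeff_zero
  have h2 := had.coeff_mul 1 (j - 1) one_pos (by omega)
  rw [show 1 + (j - 1) = j by omega, Nat.choose_one_right] at h2
  exact (mul_eq_zero.1 h2).resolve_left (by exact_mod_cast hj'.ne')

lemma two_case [Infinite k] (hβ : IsGaCoaction β) (hP : PedZero β) (x z : MvPolynomial (Fin n) k)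
    (D E : (MvPolynomial (Fin n) k)[X]) (hx : β x = C x + D) (hz : β z = C z + E)
    (hDi : InvC β D) (hEi : InvC β E) (hD0 : D ≠ 0) (hE0 : E ≠ 0)
    (hDV : ∀ i, D.coeff i ∈ Submodule.span k
      (Set.range (MvPolynomial.X : Fin n → MvPolynomial (Fin n) k)))
    (hEV : ∀ i, E.coeff i ∈ Submodule.span k
      (Set.range (MvPolynomial.X : Fin n → MvPolynomial (Fin n) k))) :
    ∃ s t : k, s ≠ 0 ∧ s • E = t • D := by
  have hpos := char_pos hβ hP x D hx hDi hD0
  obtain ⟨p, hp⟩ := CharP.exists k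
  rw [ringChar.eq k p] at *
  have : Fact p.Prime := ⟨(CharP.char_is_prime_or_zero k p).resolve_right hpos.ne'⟩
  obtain ⟨⟨g, G⟩, ⟨hg, hGi, hG0⟩, hmin⟩ := WellFounded.has_min
    (measure (fun gG : MvPolynomial (Fin n) k × (MvPolynomial (Fin n) k)[X] => gG.2.natDegree)).wf
    {gG | β gG.1 = C gG.1 + gG.2 ∧ InvC β gG.2 ∧ gG.2 ≠ 0} ⟨(x, D), hx, hDi, hD0⟩
  dsimp only at hg hGi hG0
  have hmin' : ∀ g' M', β g' = C g' + M' → InvC β M' → M' ≠ 0 → G.natDegree ≤ M'.natDegree :=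
    fun g' M' h1 h2 h3 => not_lt.1 (hmin (g', M') ⟨h1, h2, h3⟩)
  obtain ⟨b₁, hb₁, hd₁⟩ := pseudo p hβ g G hg hGi hG0 hmin' _ x D rfl hx hDi
  obtain ⟨b₂, hb₂, hd₂⟩ := pseudo p hβ g G hg hGi hG0 hmin' _ z E rfl hz hEi
  obtain ⟨r, G', hGG, hG'⟩ := gauss G
  have hG'G : G' ∣ G := ⟨C r, by rw [hGG, mul_comm]⟩
  have hdeg : (swapT n k G').totalDegree ≠ 0 := by
    intro h
    obtain ⟨m, rfl⟩ := eq_map_of_deg G' h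
    exact no_line hβ hP g G hg hGi hG0 m r (by rw [hGG, mul_comm])
  have key : ∀ M : (MvPolynomial (Fin n) k)[X], M ≠ 0 → (∀ i, M.coeff i ∈ Submodule.span k
      (Set.range (MvPolynomial.X : Fin n → MvPolynomial (Fin n) k))) → G' ∣ M →
      ∃ a : k[X], a ≠ 0 ∧ M = G' * a.map (algebraMap k (MvPolynomial (Fin n) k)) := by
    rintro M hM hMV ⟨H, rfl⟩
    have h1 := deg_le_one _ hMV
    rw [map_mul, MvPolynomial.totalDegree_mul_of_isDomain] at h1
    · obtain ⟨a, rfl⟩ := eq_map_of_deg H (by omega)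
      refine ⟨a, ?_, rfl⟩
      rintro rfl
      simp at hM
    · simpa using left_ne_zero_of_mul hM
    · simpa using right_ne_zero_of_mul hM
  obtain ⟨a, ha, hDa⟩ := key D hD0 hDV (hG' _ b₁ hb₁ (hG'G.trans hd₁))
  obtain ⟨b, hb, hEb⟩ := key E hE0 hEV (hG' _ b₂ hb₂ (hG'G.trans hd₂))
  rcases proportional D E (additive_of_inv hβ hx hDi) (additive_of_inv hβ hz hEi) hD0 a b ha
    (by rw [hDa, hEb]; ring) with ⟨m, r, h⟩ | h
  · exact absurd h (no_line hβ hP x D hx hDi hD0 m r)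
  · exact h

/-- The space of invariant linear forms. -/
noncomputable abbrev WW (β : MvPolynomial (Fin n) k →ₐ[k] Polynomial (MvPolynomial (Fin n) k)) :
    Submodule k (MvPolynomial (Fin n) k) :=
  Submodule.span k
             (Set.range (MvPolynomial.X : Fin n → MvPolynomial (Fin n) k)) ⊓
           LinearMap.eqLocus β.toLinearMap
             (Polynomial.CAlgHom (R := k)
               (A := MvPolynomial (Fin n) k)).toLinearMap

lemma mem_WW (x : MvPolynomial (Fin n) k) : x ∈ WW β ↔ x ∈ Submodule.span k
    (Set.range (MvPolynomial.X : Fin n → MvPolynomial (Fin n) k)) ∧ β x = C x := by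
  rfl

lemma finrank_V : Module.finrank k (Submodule.span k
    (Set.range (MvPolynomial.X : Fin n → MvPolynomial (Fin n) k))) = n := by
  rw [finrank_span_eq_card (MvPolynomial.linearIndependent_X (Fin n) k), Fintype.card_fin]

instance : FiniteDimensional k (Submodule.span k
    (Set.range (MvPolynomial.X : Fin n → MvPolynomial (Fin n) k))) :=
  FiniteDimensional.span_of_finite k (Set.finite_range _)

instance : FiniteDimensional k (WW β) := Submodule.finiteDimensional_inf_left _ _

lemma finrank_sup (x : MvPolynomial (Fin n) k) (hx : x ∉ WW β) :
    Module.finrank k ↥(WW β ⊔ Submodule.span k {x}) = Module.finrank k (WW β) + 1 := by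
  have h0 : x ≠ 0 := by rintro rfl; exact hx (Submodule.zero_mem _)
  have h := Submodule.finrank_sup_add_finrank_inf_eq (WW β) (Submodule.span k {x})
  have hd : WW β ⊓ Submodule.span k {x} = ⊥ :=
    ((Submodule.disjoint_span_singleton' h0).2 hx).eq_bot
  rw [hd, finrank_bot, finrank_span_singleton h0] at h
  omega

lemma coeff_mem (q : Fin n → Fin n → Polynomial k)
    (hup : ∀ i : Fin n, β (MvPolynomial.X i) =
      Polynomial.C (MvPolynomial.X i) +
        ∑ j ∈ Finset.Iio i,
          (q i j).map (algebraMap k (MvPolynomial (Fin n) k)) *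
            Polynomial.C (MvPolynomial.X j))
    (U : Submodule k (MvPolynomial (Fin n) k)) (i : Fin n)
    (hU : ∀ j < i, MvPolynomial.X j ∈ U) (l : ℕ) :
    (β (MvPolynomial.X i) - C (MvPolynomial.X i)).coeff l ∈ U := by
  rw [hup, add_sub_cancel_left, finsetSum_coeff]
  refine U.sum_mem fun j hj => ?_
  rw [coeff_mul_C, coeff_map, ← Algebra.smul_def]
  exact U.smul_mem _ (hU j (by simpa using hj))

lemma exists_X (hnt : ∃ a : MvPolynomial (Fin n) k, β a ≠ Polynomial.C a) :
    ∃ i : Fin n, β (MvPolynomial.X i) ≠ C (MvPolynomial.X i) := by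
  by_contra! hcon
  obtain ⟨a, ha⟩ := hnt
  apply ha
  have : β = Polynomial.CAlgHom (R := k) (A := MvPolynomial (Fin n) k) :=
    MvPolynomial.algHom_ext hcon
  rw [this]; rfl

end main

section final

variable {n : ℕ} {k : Type*} [Field k]
variable {β : MvPolynomial (Fin n) k →ₐ[k] Polynomial (MvPolynomial (Fin n) k)}

lemma exists_min_X (S : Set (Fin n)) (hS : S.Nonempty) : ∃ i ∈ S, ∀ j < i, j ∉ S := by
  obtain ⟨i, hi, hmin⟩ := WellFounded.has_min (wellFounded_lt (α := Fin n)) S hS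
  exact ⟨i, hi, fun j hj hjS => hmin j hjS hj⟩

lemma X_mem_V (i : Fin n) : MvPolynomial.X i ∈ Submodule.span k
    (Set.range (MvPolynomial.X : Fin n → MvPolynomial (Fin n) k)) :=
  Submodule.subset_span ⟨i, rfl⟩

lemma coeff_zero_sub (hβ : IsGaCoaction β) (x : MvPolynomial (Fin n) k) :
    (β x - C x).coeff 0 = 0 := by
  rw [coeff_zero_eq_eval_zero, eval_sub, hβ.1, eval_C, sub_self]

lemma forward [Infinite k] (hβ : IsGaCoaction β)
    (q : Fin n → Fin n → Polynomial k)
    (hup : ∀ i : Fin n, β (MvPolynomial.X i) =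
      Polynomial.C (MvPolynomial.X i) +
        ∑ j ∈ Finset.Iio i,
          (q i j).map (algebraMap k (MvPolynomial (Fin n) k)) *
            Polynomial.C (MvPolynomial.X j))
    (hnt : ∃ a : MvPolynomial (Fin n) k, β a ≠ Polynomial.C a) (hP : PedZero β) :
    0 < ringChar k ∧ Module.finrank k (WW β) = n - 1 := by
  obtain ⟨i, hi, hmin⟩ := exists_min_X {i : Fin n | β (MvPolynomial.X i) ≠ C (MvPolynomial.X i)}
    (exists_X hnt)
  simp only [Set.mem_ofPred_eq, not_not] at hi hmin
  set x : MvPolynomial (Fin n) k := MvPolynomial.X i with hx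
  set D := β x - C x with hD
  have hxD : β x = C x + D := by rw [hD]; ring
  have hD0 : D ≠ 0 := sub_ne_zero.2 hi
  have hDW : ∀ l, D.coeff l ∈ WW β := fun l =>
    coeff_mem q hup (WW β) i (fun j hj => (mem_WW _).2 ⟨X_mem_V j, hmin j hj⟩) l
  have hDi : InvC β D := (invC_iff _ _).2 fun l => ((mem_WW _).1 (hDW l)).2
  refine ⟨char_pos hβ hP x D hxD hDi hD0, ?_⟩
  have hxW : x ∉ WW β := fun h => hi ((mem_WW _).1 h).2
  have hU : ∀ j : Fin n, MvPolynomial.X j ∈ WW β ⊔ Submodule.span k {x} := by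
    by_contra hcon
    push Not at hcon
    obtain ⟨j, hj, hjmin⟩ := exists_min_X
      {j : Fin n | MvPolynomial.X j ∉ WW β ⊔ Submodule.span k {x}} hcon
    simp only [Set.mem_ofPred_eq, not_not] at hj hjmin
    set z : MvPolynomial (Fin n) k := MvPolynomial.X j with hz
    set E := β z - C z with hE
    have hzE : β z = C z + E := by rw [hE]; ring
    have hEU : ∀ l, E.coeff l ∈ WW β ⊔ Submodule.span k {x} := fun l =>
      coeff_mem q hup _ j hjmin l
    have hzW : z ∉ WW β := fun h => hj (Submodule.mem_sup_left h)
    by_cases hEW : ∀ l, E.coeff l ∈ WW β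
    · have hE0 : E ≠ 0 := by
        intro h
        apply hzW
        rw [mem_WW, hzE, h, add_zero]
        exact ⟨X_mem_V j, rfl⟩
      obtain ⟨s, t, hs, hst⟩ := two_case hβ hP x z D E hxD hzE hDi
        ((invC_iff _ _).2 fun l => ((mem_WW _).1 (hEW l)).2) hD0 hE0
        (fun l => ((mem_WW _).1 (hDW l)).1) (fun l => ((mem_WW _).1 (hEW l)).1)
      have hw : s • z - t • x ∈ WW β := by
        rw [mem_WW]
        refine ⟨Submodule.sub_mem _ (Submodule.smul_mem _ _ (X_mem_V j))
          (Submodule.smul_mem _ _ (X_mem_V i)), ?_⟩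
        rw [map_sub, map_smul, map_smul, hxD, hzE, C_sub, beta_smul_C, beta_smul_C, smul_add,
          smul_add, hst]
        ring
      apply hj
      have h1 : z = s⁻¹ • (s • z - t • x) + (s⁻¹ * t) • x := by
        rw [smul_sub, smul_smul, smul_smul, inv_mul_cancel₀ hs, one_smul, sub_add_cancel]
      rw [h1]
      exact Submodule.add_mem_sup (Submodule.smul_mem _ _ hw)
        (Submodule.smul_mem _ _ (Submodule.mem_span_singleton_self x))
    · push Not at hEW
      obtain ⟨l, hl⟩ := hEW
      have hdec : ∀ l, ∃ w ∈ WW β, ∃ r : k, w + r • x = E.coeff l := by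
        intro l
        obtain ⟨w, hw, y, hy, hwy⟩ := Submodule.mem_sup.1 (hEU l)
        obtain ⟨r, rfl⟩ := Submodule.mem_span_singleton.1 hy
        exact ⟨w, hw, r, hwy⟩
      choose w hw r hr using hdec
      have hrl : r l ≠ 0 := by
        intro h
        apply hl
        rw [← hr l, h, zero_smul, add_zero]
        exact hw l
      have hE00 : E.coeff 0 = 0 := coeff_zero_sub hβ z
      have hD00 : D.coeff 0 = 0 := coeff_zero_sub hβ x
      have hl0 : l ≠ 0 := by
        rintro rfl
        rw [hE00] at hl
        exact hl (Submodule.zero_mem _)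
      have hcz : ∀ u, u ≠ 0 → (β z).coeff u = w u + r u • x := by
        intro u hu
        rw [hzE, coeff_add, coeff_C, if_neg hu, zero_add, hr]
      have hc : ∀ u v, u ≠ 0 → v ≠ 0 → ((u + v).choose u : MvPolynomial (Fin n) k) *
          (β z).coeff (u + v) = r u • D.coeff v := by
        intro u v hu hv
        rw [coeff_choose hβ, hcz u hu, map_add, map_smul, hxD, ((mem_WW _).1 (hw u)).2]
        simp [coeff_C, hv]
      obtain ⟨c, hcD⟩ := line_of_coeff (k := k) D (D.coeff l) (by
        intro v
        rcases eq_or_ne v 0 with rfl | hv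
        · exact ⟨0, by rw [hD00, zero_smul]⟩
        · refine ⟨(r l)⁻¹ * r v, ?_⟩
          have h1 := hc l v hl0 hv
          have h2 := hc v l hv hl0
          rw [add_comm v l, ← Nat.choose_symm_add, h1] at h2
          rw [mul_smul, ← h2, smul_smul, inv_mul_cancel₀ hrl, one_smul])
      exact no_line hβ hP x D hxD hDi hD0 c _ hcD
  have hsup : WW β ⊔ Submodule.span k {x} = Submodule.span k
      (Set.range (MvPolynomial.X : Fin n → MvPolynomial (Fin n) k)) := by
    apply le_antisymm
    · refine sup_le inf_le_left ?_
      rw [Submodule.span_singleton_le_iff_mem]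
      exact X_mem_V i
    · rw [Submodule.span_le]
      rintro _ ⟨j, rfl⟩
      exact hU j
  have h1 := finrank_sup x hxW
  rw [hsup, finrank_V] at h1
  omega

lemma backward (hβ : IsGaCoaction β)
    (q : Fin n → Fin n → Polynomial k)
    (hup : ∀ i : Fin n, β (MvPolynomial.X i) =
      Polynomial.C (MvPolynomial.X i) +
        ∑ j ∈ Finset.Iio i,
          (q i j).map (algebraMap k (MvPolynomial (Fin n) k)) *
            Polynomial.C (MvPolynomial.X j))
    (hnt : ∃ a : MvPolynomial (Fin n) k, β a ≠ Polynomial.C a)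
    (hrank : Module.finrank k (WW β) = n - 1)
    (hno : ∀ x ∈ Submodule.span k
           (Set.range (MvPolynomial.X : Fin n → MvPolynomial (Fin n) k)),
         β x ≠ Polynomial.C x →
         ∀ (c : Polynomial k) (w : MvPolynomial (Fin n) k),
           w ∈ Submodule.span k
             (Set.range (MvPolynomial.X : Fin n → MvPolynomial (Fin n) k)) →
           β w = Polynomial.C w →
           β x - Polynomial.C x ≠
             c.map (algebraMap k (MvPolynomial (Fin n) k)) * Polynomial.C w) : PedZero β := by
  intro g h c _ hc _ hg
  by_contra hh
  obtain ⟨i, hi⟩ := exists_X hnt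
  set x : MvPolynomial (Fin n) k := MvPolynomial.X i with hx
  set D := β x - C x with hD
  have hxD : β x = C x + D := by rw [hD]; ring
  have hD0 : D ≠ 0 := sub_ne_zero.2 hi
  have hxW : x ∉ WW β := fun h => hi ((mem_WW _).1 h).2
  have hsup : WW β ⊔ Submodule.span k {x} = Submodule.span k
      (Set.range (MvPolynomial.X : Fin n → MvPolynomial (Fin n) k)) := by
    apply Submodule.eq_of_le_of_finrank_eq
    · refine sup_le inf_le_left ?_
      rw [Submodule.span_singleton_le_iff_mem]
      exact X_mem_V i
    · rw [finrank_sup x hxW, finrank_V, hrank]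
      have := i.pos
      omega
  have hX : ∀ j : Fin n, D ∣ β (MvPolynomial.X j) - C (MvPolynomial.X j) := by
    intro j
    have hj : (MvPolynomial.X j : MvPolynomial (Fin n) k) ∈ WW β ⊔ Submodule.span k {x} := by
      rw [hsup]; exact X_mem_V j
    obtain ⟨w, hw, y, hy, hwy⟩ := Submodule.mem_sup.1 hj
    obtain ⟨r, rfl⟩ := Submodule.mem_span_singleton.1 hy
    rw [← hwy, map_add, map_smul, ((mem_WW _).1 hw).2, C_add, beta_smul_C, add_sub_add_left_eq_sub,
      ← smul_sub, Algebra.smul_def]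
    exact Dvd.intro_left _ rfl
  have hall : ∀ g, D ∣ β g - C g := by
    intro g
    induction g using MvPolynomial.induction_on with
    | C a =>
      have h1 := β.commutes a
      rw [MvPolynomial.algebraMap_eq, Polynomial.algebraMap_apply, MvPolynomial.algebraMap_eq] at h1
      rw [h1, sub_self]
      exact dvd_zero _
    | add p q hp hq =>
      rw [map_add, C_add, add_sub_add_comm]
      exact dvd_add hp hq
    | mul_X p j hp =>
      have h1 : β (p * MvPolynomial.X j) - C (p * MvPolynomial.X j) =
          (β p - C p) * β (MvPolynomial.X j) +
            C p * (β (MvPolynomial.X j) - C (MvPolynomial.X j)) := by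
        rw [map_mul, C_mul]; ring
      rw [h1]
      exact dvd_add (hp.mul_right _) ((hX j).mul_left _)
  have hdvd := hall g
  rw [hg, add_sub_cancel_left] at hdvd
  obtain ⟨m, r, hmr⟩ := line_of_dvd D c h hc hh hdvd
  have hr := line_lead hD0 m r hmr
  refine hno x (X_mem_V i) hi m r ?_ ?_ hmr
  · rw [← hr]
    exact Submodule.smul_mem _ _ (coeff_mem q hup _ i (fun j _ => X_mem_V j) _)
  · rw [← hr, map_smul, lead_inv hβ x D hxD, beta_smul_C]

lemma third (hβ : IsGaCoaction β) (hP : PedZero β) :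
    ∀ x ∈ Submodule.span k
           (Set.range (MvPolynomial.X : Fin n → MvPolynomial (Fin n) k)),
         β x ≠ Polynomial.C x →
         ∀ (c : Polynomial k) (w : MvPolynomial (Fin n) k),
           w ∈ Submodule.span k
             (Set.range (MvPolynomial.X : Fin n → MvPolynomial (Fin n) k)) →
           β w = Polynomial.C w →
           β x - Polynomial.C x ≠
             c.map (algebraMap k (MvPolynomial (Fin n) k)) * Polynomial.C w := by
  intro x _ hx c w _ hw h
  refine no_line hβ hP x (β x - C x) (by ring) ?_ (sub_ne_zero.2 hx) c w h
  rw [invC_iff]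
  intro l
  rw [h, coeff_mul_C, coeff_map, ← Algebra.smul_def, map_smul, hw, beta_smul_C]

end final

/-- classification of representations with zero large pedestal
ideal: for a nontrivial linear, upper-triangular coaction on `k[x₁,…,xₙ]` with
space of invariant linear forms `W`, the large pedestal ideal is zero iff `k`
has positive characteristic, `W` has dimension `n − 1`, and for no linear form
`x ∉ W` is `β(x) − x` of the form `c(t)·w` with `w ∈ W`.  In particular, a zero
large pedestal ideal forces positive characteristic. -/
theorem stmt10 {k : Type*} [Field k] [IsAlgClosed k] {n : ℕ}
    (β : MvPolynomial (Fin n) k →ₐ[k] Polynomial (MvPolynomial (Fin n) k))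
    (hβ : IsGaCoaction β)
    (q : Fin n → Fin n → Polynomial k)
    (hup : ∀ i : Fin n, β (MvPolynomial.X i) =
      Polynomial.C (MvPolynomial.X i) +
        ∑ j ∈ Finset.Iio i,
          (q i j).map (algebraMap k (MvPolynomial (Fin n) k)) *
            Polynomial.C (MvPolynomial.X j))
    (hnt : ∃ a : MvPolynomial (Fin n) k, β a ≠ Polynomial.C a) :
    ((∀ (g h : MvPolynomial (Fin n) k) (c : Polynomial k),
        IsAdditivePoly c → c ≠ 0 →
        β h = Polynomial.C h →
        β g = Polynomial.C g +
          c.map (algebraMap k (MvPolynomial (Fin n) k)) * Polynomial.C h →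
        h = 0) ↔
      (0 < ringChar k ∧
       Module.finrank k
         ↥(Submodule.span k
             (Set.range (MvPolynomial.X : Fin n → MvPolynomial (Fin n) k)) ⊓
           LinearMap.eqLocus β.toLinearMap
             (Polynomial.CAlgHom (R := k)
               (A := MvPolynomial (Fin n) k)).toLinearMap) = n - 1 ∧
       ∀ x ∈ Submodule.span k
           (Set.range (MvPolynomial.X : Fin n → MvPolynomial (Fin n) k)),
         β x ≠ Polynomial.C x →
         ∀ (c : Polynomial k) (w : MvPolynomial (Fin n) k),
           w ∈ Submodule.span k
             (Set.range (MvPolynomial.X : Fin n → MvPolynomial (Fin n) k)) →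
           β w = Polynomial.C w →
           β x - Polynomial.C x ≠
             c.map (algebraMap k (MvPolynomial (Fin n) k)) * Polynomial.C w)) ∧
    ((∀ (g h : MvPolynomial (Fin n) k) (c : Polynomial k),
        IsAdditivePoly c → c ≠ 0 →
        β h = Polynomial.C h →
        β g = Polynomial.C g +
          c.map (algebraMap k (MvPolynomial (Fin n) k)) * Polynomial.C h →
        h = 0) → 0 < ringChar k) := by
  have : Infinite k := IsAlgClosed.instInfinite
  refine ⟨⟨fun hP => ?_, fun h => ?_⟩, fun hP => (forward hβ q hup hnt hP).1⟩
  · obtain ⟨h1, h2⟩ := forward hβ q hup hnt hP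
    exact ⟨h1, h2, third hβ hP⟩
  · exact backward hβ q hup hnt h.2.1 h.2.2
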